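/- Fix integers n ≥ 1 and r ≥ 1, and let x, x′ : Fin r → 𝔽₂ⁿ be tuples with no common entry (x_i ≠ x′_j for all i, j ∈ Fin r). Then 2r · #{a ∈ 𝔽₂ⁿ : ∑_{j} χ(a, x_j) ≠ ∑_{j} χ(a, x′_j)} ≥ 2ⁿ, where the sums are taken in ℤ. -/

import Mathlib

/-- The integer-valued character `χ(a, x) = (-1)^{⟨a,x⟩}` on `𝔽₂ⁿ`. -/
def chi {ι : Type*} [Fintype ι] (a x : ι → ZMod 2) : ℤ :=
  if ∑ i, a i * x i = 0 then 1 else -1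

/-!
Two distinct multisets `s` and `t` of vectors give different multiplicities `p ≠ q` to some `y`.
Then `f a = ∑_{x ∈ s} χ(a, x) - ∑_{x ∈ t} χ(a, x)` has Fourier coefficient
`∑ₐ f a * χ(a, y) = 2ⁿ (p - q)`, a nonzero multiple of `2ⁿ`. Since `|f| ≤ |s| + |t|` and `|χ| = 1`,
the same coefficient is at most `(|s| + |t|) * #(supp f)` in absolute value.
-/

open Finset

lemma abs_sum_le_card_support_mul {α R : Type*} [Fintype α] [Ring R] [LinearOrder R]
    [IsOrderedRing R] (f : α → R) {C : R} (hf : ∀ a, |f a| ≤ C) :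
    |∑ a, f a| ≤ #{a | f a ≠ 0} * C := by
  rw [← sum_filter_ne_zero, ← nsmul_eq_mul]
  exact (abs_sum_le_sum_abs _ _).trans (sum_le_card_nsmul _ _ _ fun a _ ↦ hf a)

lemma map_univ_val_ne_of_forall_ne {κ κ' α : Type*} [Fintype κ] [Fintype κ'] [Nonempty κ]
    {x : κ → α} {x' : κ' → α} (h : ∀ i j, x i ≠ x' j) :
    univ.val.map x ≠ univ.val.map x' := by
  intro heq
  obtain ⟨i⟩ := ‹Nonempty κ›
  have hmem : x i ∈ univ.val.map x' := heq ▸ Multiset.mem_map_of_mem x (mem_univ_val i)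
  obtain ⟨j, -, hj⟩ := Multiset.mem_map.mp hmem
  exact h i j hj.symm

section Character

variable {ι : Type*} [Fintype ι]

lemma chi_comm (a x : ι → ZMod 2) : chi a x = chi x a := by
  simp only [chi, mul_comm]

lemma chi_zero_left (x : ι → ZMod 2) : chi 0 x = 1 := by
  simp [chi]

lemma chi_add_left (a b x : ι → ZMod 2) : chi (a + b) x = chi a x * chi b x := by
  have sign_add (u v : ZMod 2) : (if u + v = 0 then 1 else -1 : ℤ) =
      (if u = 0 then 1 else -1) * (if v = 0 then 1 else -1) := by
    revert u v
    decide
  simp only [chi, Pi.add_apply, add_mul, sum_add_distrib, sign_add]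

lemma chi_add_right (a x y : ι → ZMod 2) : chi a (x + y) = chi a x * chi a y := by
  simp only [chi_comm a, chi_add_left]

lemma abs_chi (a x : ι → ZMod 2) : |chi a x| = 1 := by
  unfold chi
  split_ifs <;> simp

lemma chi_ne_zero (a x : ι → ZMod 2) : chi a x ≠ 0 :=
  abs_ne_zero.mp (by simp [abs_chi])

lemma chi_single_left [DecidableEq ι] (i : ι) (x : ι → ZMod 2) :
    chi (Pi.single i 1) x = if x i = 0 then 1 else -1 := by
  simp [chi, Pi.single_apply]

lemma abs_sum_map_chi_le (a : ι → ZMod 2) (s : Multiset (ι → ZMod 2)) :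
    |(s.map (chi a)).sum| ≤ s.card :=
  Multiset.abs_sum_le_sum_abs.trans (by simp [Multiset.map_map, abs_chi])

/-- The map `a ↦ χ(a, x)` as an additive character of `𝔽₂ⁿ`, which gives access to the
orthogonality of characters. -/
def chiAddChar (x : ι → ZMod 2) : AddChar (ι → ZMod 2) ℤ where
  toFun a := chi a x
  map_zero_eq_one' := chi_zero_left x
  map_add_eq_mul' a b := chi_add_left a b x

lemma chiAddChar_apply (x a : ι → ZMod 2) : chiAddChar x a = chi a x := rfl

lemma chiAddChar_eq_zero_iff {x : ι → ZMod 2} : chiAddChar x = 0 ↔ x = 0 := by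
  classical
  constructor
  · intro h
    ext i
    have hi : chi (Pi.single i 1) x = 1 := DFunLike.congr_fun h (Pi.single i 1)
    by_contra hxi
    simp [chi_single_left, show x i ≠ 0 from hxi] at hi
  · rintro rfl
    ext a
    simp [chiAddChar_apply, chi_comm a, chi_zero_left]

variable [DecidableEq ι]

lemma sum_chi (x : ι → ZMod 2) :
    ∑ a, chi a x = if x = 0 then 2 ^ Fintype.card ι else 0 := by
  classical
  simpa [chiAddChar_apply, chiAddChar_eq_zero_iff] using AddChar.sum_eq_ite (chiAddChar x)

lemma sum_chi_mul_chi (x y : ι → ZMod 2) :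
    ∑ a, chi a x * chi a y = if x = y then 2 ^ Fintype.card ι else 0 := by
  have hxy : x + y = 0 ↔ x = y := by
    simp only [funext_iff, Pi.add_apply, Pi.zero_apply, CharTwo.add_eq_zero]
  simp only [← chi_add_right, sum_chi, hxy]

lemma sum_sum_map_chi_mul_chi (s : Multiset (ι → ZMod 2)) (y : ι → ZMod 2) :
    ∑ a, (s.map (chi a)).sum * chi a y = 2 ^ Fintype.card ι * s.count y := by
  induction s using Multiset.induction with
  | empty => simp
  | cons x s ih =>
    simp [add_mul, mul_add, sum_add_distrib, ih, sum_chi_mul_chi, Multiset.count_cons, add_comm,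
      eq_comm]

theorem stmt1_general {s t : Multiset (ι → ZMod 2)} (hst : s ≠ t) :
    2 ^ Fintype.card ι ≤ (s.card + t.card) *
      #{a : ι → ZMod 2 | (s.map (chi a)).sum ≠ (t.map (chi a)).sum} := by
  obtain ⟨y, hy⟩ : ∃ y, s.count y ≠ t.count y := by
    simpa only [ne_eq, Multiset.ext, not_forall] using hst
  let f (a : ι → ZMod 2) : ℤ := (s.map (chi a)).sum - (t.map (chi a)).sum
  have coeff : ∑ a, f a * chi a y = 2 ^ Fintype.card ι * ((s.count y : ℤ) - t.count y) := by
    simp only [f, sub_mul, sum_sub_distrib, sum_sum_map_chi_mul_chi, mul_sub]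
  have lower : (2 : ℤ) ^ Fintype.card ι ≤ |∑ a, f a * chi a y| := by
    have one_le : 1 ≤ |(s.count y : ℤ) - t.count y| :=
      Int.one_le_abs (sub_ne_zero.mpr (mod_cast hy))
    rw [coeff, abs_mul, abs_of_pos (by positivity)]
    exact le_mul_of_one_le_right (by positivity) one_le
  have bound (a : ι → ZMod 2) : |f a * chi a y| ≤ s.card + t.card := by
    rw [abs_mul, abs_chi, mul_one]
    exact (abs_sub _ _).trans (add_le_add (abs_sum_map_chi_le a s) (abs_sum_map_chi_le a t))
  have upper := abs_sum_le_card_support_mul _ bound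
  simp only [mul_ne_zero_iff_right (chi_ne_zero _ y), f, sub_ne_zero] at upper
  rw [mul_comm]
  exact_mod_cast lower.trans upper

end Character

/-- Parseval-type support lower bound: if the tuples `x, x'` share no common entry, then
`2r · #{a : ∑_j χ(a,x_j) ≠ ∑_j χ(a,x'_j)} ≥ 2ⁿ`. -/
theorem stmt1 (n r : ℕ) (hn : 1 ≤ n) (hr : 1 ≤ r)
    (x x' : Fin r → (Fin n → ZMod 2))
    (hdisj : ∀ i j, x i ≠ x' j) :
    2 ^ n ≤ 2 * r * (Finset.univ.filter
      (fun a : Fin n → ZMod 2 =>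
        (∑ j, chi a (x j)) ≠ ∑ j, chi a (x' j))).card := by
  have : Nonempty (Fin r) := ⟨⟨0, hr⟩⟩
  simpa [two_mul, List.sum_ofFn] using stmt1_general (map_univ_val_ne_of_forall_ne hdisj)
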